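/- Let A(t), t ∈ I, be a Kato-stable family of generators of strongly continuous semigroups on a Banach space X with constants M, ω, and assume that t ↦ R(ω', A(t)) is strongly continuous on I for some ω' > ω. Then the Yosida approximants A_n(t) = n A(t) R(n, A(t)), for n > ω, form an admissible bounded approximation of A(t): t ↦ A_n(t) is strongly continuous, A_n(t)y → A(t)y as n → ∞ for every y ∈ D(A(t)), ‖A_n(t)y‖ ≤ c(‖A(t)y‖ + ‖y‖) for all y ∈ D(A(t)) and a constant c > 0, and the propagators U_n(t,s) generated by A_n(·) are exponentially bounded with constants independent of n. -/

import Mathlib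

open MeasureTheory Set Real Filter
open scoped Topology

/-!
On `D(A)` one has `n A R(n, A) y = n R(n, A) A y`, so the relative bound and the convergence follow
from `‖n R(n, A)‖ ≤ M n / (n - ω)` and from `n R(n, A) → 1` strongly. Strong continuity passes from
`R(ω', A(·))` to every `R(n, A(·))` by a factorization of `R(n, A(t)) - R(n, A(s))` through
`R(ω', A(t)) - R(ω', A(s))`.

For the propagators, write `A_n = B - n` with `B = n² R(n, A(·))`. The `k`-th term of the Dyson
series of `B` is an iterated integral of time-ordered products of `k` values of `B`, which Kato
stability bounds by `M β ^ k` with `β = n² / (n - ω)`. Hence the series is bounded by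
`M exp (β (t - s))`, and multiplying by `exp (-n (t - s))` leaves the growth rate
`β - n = ω n / (n - ω)`, which is bounded in `n`.
-/

section StrongContinuity

variable {T 𝕜 X Y : Type*} [TopologicalSpace T] [NontriviallyNormedField 𝕜]
  [NormedAddCommGroup X] [NormedSpace 𝕜 X] [NormedAddCommGroup Y] [NormedSpace 𝕜 Y]
  {B : T → X →L[𝕜] Y} {K J : Set T}

/-- Continuity of an operator-valued function on a set, for the strong operator topology. -/
def StronglyContinuousOn (B : T → X →L[𝕜] Y) (K : Set T) : Prop :=
  ∀ x, ContinuousOn (fun t => B t x) K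

namespace StronglyContinuousOn

theorem mono (hB : StronglyContinuousOn B J) (hKJ : K ⊆ J) : StronglyContinuousOn B K :=
  fun x => (hB x).mono hKJ

theorem const_smul (hB : StronglyContinuousOn B K) (c : 𝕜) :
    StronglyContinuousOn (fun t => c • B t) K :=
  fun x => (hB x).const_smul c

theorem sub_const (hB : StronglyContinuousOn B K) (S : X →L[𝕜] Y) :
    StronglyContinuousOn (fun t => B t - S) K :=
  fun x => (hB x).sub continuousOn_const

theorem exists_norm_le [CompleteSpace X] (hB : StronglyContinuousOn B K) (hK : IsCompact K) :
    ∃ C, ∀ t ∈ K, ‖B t‖ ≤ C := by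
  obtain ⟨C, hC⟩ := banach_steinhaus (g := fun t : K => B t) fun x =>
    (hK.exists_bound_of_continuousOn (hB x)).imp fun _ h t => h t t.2
  exact ⟨C, fun t ht => hC ⟨t, ht⟩⟩

theorem continuousOn_uncurry [CompleteSpace X] (hB : StronglyContinuousOn B K)
    (hK : IsCompact K) :
    ContinuousOn (Function.uncurry fun t => ⇑(B t)) (K ×ˢ univ) := by
  obtain ⟨C, hC⟩ := hB.exists_norm_le hK
  refine continuousOn_prod_of_continuousOn_lipschitzOnWith' _ C.toNNReal (fun t ht => ?_)
    fun x _ => hB x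
  exact ((B t).lipschitz.weaken (NNReal.le_toNNReal_of_coe_le (hC t ht))).lipschitzOnWith

theorem clm_apply [CompleteSpace X] (hB : StronglyContinuousOn B K) (hK : IsCompact K)
    {f : T → X} (hf : ContinuousOn f K) : ContinuousOn (fun t => B t (f t)) K :=
  (hB.continuousOn_uncurry hK).comp (continuousOn_id.prodMk hf) fun _ ht => ⟨ht, mem_univ _⟩

end StronglyContinuousOn

theorem tendsto_clm_apply_of_dense {ι : Type*} {l : Filter ι} {F : ι → X →L[𝕜] Y}
    {S : X →L[𝕜] Y} {C : ℝ} {D : Set X} (hF : ∀ᶠ i in l, ‖F i‖ ≤ C) (hD : Dense D)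
    (hFS : ∀ y ∈ D, Tendsto (fun i => F i y) l (𝓝 (S y))) (x : X) :
    Tendsto (fun i => F i x) l (𝓝 (S x)) := by
  have hrange : range ((↑) : {i // ‖F i‖ ≤ C} → ι) ∈ l := by simpa using! hF
  have hequi : Equicontinuous ((↑) ∘ fun i : {i // ‖F i‖ ≤ C} => F i) :=
    ((NormedSpace.equicontinuous_TFAE fun i : {i // ‖F i‖ ≤ C} => F i).out 1 5).2
      (show ∃ C', ∀ i : {i // ‖F i‖ ≤ C}, ‖F i‖ ≤ C' from ⟨C, Subtype.prop⟩)
  refine (tendsto_comap'_iff hrange).1 ((hequi x).tendsto_of_mem_closure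
    (S.continuous.tendsto x |>.mono_left nhdsWithin_le_nhds) (fun y hy => ?_) (hD x))
  exact (tendsto_comap'_iff hrange).2 (hFS y hy)

end StrongContinuity

section Resolvent

/-- With `S - R = c S R` and `S₀ - R₀ = c R₀ S₀`, as for resolvents at two fixed points whose
difference is `c`, this compares the resolvents of two generators at one point through those at the
other. -/
theorem sub_eq_mul_sub_mul_of_resolvent_identity {𝕜 𝔸 : Type*} [CommRing 𝕜] [Ring 𝔸]
    [Algebra 𝕜 𝔸] {c : 𝕜} {R S R₀ S₀ : 𝔸} (h : S - R = c • (S * R))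
    (h₀ : S₀ - R₀ = c • (R₀ * S₀)) :
    S - S₀ = (1 + c • S) * (R - R₀) * (1 + c • S₀) := by
  have hS : (1 + c • S) * R = S := by rw [add_mul, one_mul, smul_mul_assoc, ← h]; abel
  have hS₀ : R₀ * (1 + c • S₀) = S₀ := by rw [mul_add, mul_one, mul_smul_comm, ← h₀]; abel
  rw [mul_sub, sub_mul, hS, mul_assoc _ R₀, hS₀, mul_add, add_mul, mul_one, one_mul,
    smul_mul_assoc, mul_smul_comm]
  abel

theorem StronglyContinuousOn.of_resolvent_identity {T 𝕜 X : Type*} [TopologicalSpace T]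
    [NontriviallyNormedField 𝕜] [NormedAddCommGroup X] [NormedSpace 𝕜 X] {J : Set T} {c : 𝕜}
    {R S : T → X →L[𝕜] X} {C : ℝ} (hR : StronglyContinuousOn R J)
    (hSR : ∀ t ∈ J, S t - R t = c • (S t * R t)) (hRS : ∀ t ∈ J, S t - R t = c • (R t * S t))
    (hC : ∀ t ∈ J, ‖S t‖ ≤ C) : StronglyContinuousOn S J := by
  intro x s hs
  set z := (1 + c • S s) x
  have hfactor (t) (ht : t ∈ J) : S t x - S s x = (1 + c • S t) (R t z - R s z) :=
    DFunLike.congr_fun (sub_eq_mul_sub_mul_of_resolvent_identity (hSR t ht) (hRS s hs)) x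
  have hnorm (t) (ht : t ∈ J) : ‖1 + c • S t‖ ≤ 1 + ‖c‖ * C := by
    refine (norm_add_le _ _).trans (add_le_add ContinuousLinearMap.norm_id_le ?_)
    rw [norm_smul]
    gcongr
    exact hC t ht
  refine tendsto_iff_norm_sub_tendsto_zero.2 (squeeze_zero' (.of_forall fun _ => norm_nonneg _)
    (g := fun t => (1 + ‖c‖ * C) * ‖R t z - R s z‖) ?_ ?_)
  · filter_upwards [self_mem_nhdsWithin] with t ht
    rw [hfactor t ht]
    exact (1 + c • S t).le_of_opNorm_le (hnorm t ht) _
  · simpa using (tendsto_iff_norm_sub_tendsto_zero.1 (hR z s hs)).const_mul (1 + ‖c‖ * C)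

variable {X : Type*} [NormedAddCommGroup X] [NormedSpace ℝ X]

/-- `R lam` is the resolvent `(lam - A)⁻¹` of the unbounded operator `A` with domain `D`, for every
`lam > ω`. The values of `A` off `D` and of `R` on `(-∞, ω]` are junk. -/
structure IsResolventFamily (D : Set X) (A : X → X) (ω : ℝ) (R : ℝ → X →L[ℝ] X) : Prop where
  mem_domain : ∀ lam, ω < lam → ∀ x, R lam x ∈ D
  smul_sub_apply : ∀ lam, ω < lam → ∀ x, lam • R lam x - A (R lam x) = x
  apply_smul_sub : ∀ lam, ω < lam → ∀ y ∈ D, R lam (lam • y - A y) = y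

/-- The Yosida approximant `lam A R(lam, A)`, written as `lam² R - lam` in terms of the resolvent
`R = R(lam, A)`. -/
noncomputable def yosidaApprox (lam : ℝ) (R : X →L[ℝ] X) : X →L[ℝ] X :=
  lam ^ 2 • R - lam • (1 : X →L[ℝ] X)

namespace IsResolventFamily

variable {D : Set X} {A : X → X} {ω M lam mu : ℝ} {R : ℝ → X →L[ℝ] X} {y : X}

theorem smul_apply (hR : IsResolventFamily D A ω R) (hlam : ω < lam) (hy : y ∈ D) :
    lam • R lam y = y + R lam (A y) := by
  rw [← sub_eq_iff_eq_add, ← map_smul, ← map_sub, hR.apply_smul_sub lam hlam y hy]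

theorem sub_eq_smul_mul (hR : IsResolventFamily D A ω R) (hlam : ω < lam) (hmu : ω < mu) :
    R lam - R mu = (mu - lam) • (R lam * R mu) := by
  ext x
  have hx : R lam x = mu • R lam (R mu x) - R lam (A (R mu x)) := by
    rw [← map_smul, ← map_sub, hR.smul_sub_apply mu hmu]
  have hRx := hR.smul_apply hlam (hR.mem_domain mu hmu x)
  simp only [_root_.sub_apply, _root_.smul_apply, mul_apply_eq_comp, sub_smul]
  rw [hx, hRx]
  abel

theorem sub_eq_smul_mul_swap (hR : IsResolventFamily D A ω R) (hlam : ω < lam) (hmu : ω < mu) :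
    R lam - R mu = (mu - lam) • (R mu * R lam) := by
  rw [← neg_sub, hR.sub_eq_smul_mul hmu hlam, ← neg_smul, neg_sub]

theorem yosidaApprox_apply (hR : IsResolventFamily D A ω R) (hlam : ω < lam) (hy : y ∈ D) :
    yosidaApprox lam (R lam) y = lam • R lam (A y) := by
  simp only [yosidaApprox, _root_.sub_apply, _root_.smul_apply, one_apply_eq_self]
  rw [pow_two, mul_smul, hR.smul_apply hlam hy, smul_add, add_sub_cancel_left]

theorem norm_yosidaApprox_apply_le (hR : IsResolventFamily D A ω R) (hlam : ω < lam)
    (hlam₀ : 0 ≤ lam) (hM : ‖R lam‖ ≤ M * (lam - ω)⁻¹) (hy : y ∈ D) :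
    ‖yosidaApprox lam (R lam) y‖ ≤ M * (lam / (lam - ω)) * ‖A y‖ := by
  calc ‖yosidaApprox lam (R lam) y‖ = lam * ‖R lam (A y)‖ := by
        rw [hR.yosidaApprox_apply hlam hy, norm_smul, norm_of_nonneg hlam₀]
    _ ≤ lam * (M * (lam - ω)⁻¹ * ‖A y‖) := by gcongr; exact (R lam).le_of_opNorm_le hM _
    _ = M * (lam / (lam - ω)) * ‖A y‖ := by ring

theorem tendsto_smul_apply (hR : IsResolventFamily D A ω R) (hD : Dense D)
    (hM : ∀ lam, ω < lam → ‖R lam‖ ≤ M * (lam - ω)⁻¹) (x : X) :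
    Tendsto (fun lam => lam • R lam x) atTop (𝓝 x) := by
  have hbound : ∀ᶠ lam in atTop, ‖lam • R lam‖ ≤ 2 * M := by
    filter_upwards [eventually_gt_atTop ω, eventually_ge_atTop (2 * ω), eventually_ge_atTop 0]
      with lam hω h2ω h0
    have hpos : 0 < lam - ω := sub_pos.2 hω
    have : 0 ≤ M := nonneg_of_mul_nonneg_left ((norm_nonneg _).trans (hM lam hω))
      (inv_pos.2 hpos)
    calc ‖lam • R lam‖ = lam * ‖R lam‖ := by rw [norm_smul, norm_of_nonneg h0]
      _ ≤ (2 * (lam - ω)) * (M * (lam - ω)⁻¹) := by gcongr; exacts [by linarith, hM lam hω]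
      _ = 2 * M := by field_simp
  have hinv : Tendsto (fun lam => M * (lam - ω)⁻¹) atTop (𝓝 0) := by
    simpa [sub_eq_add_neg] using
      (tendsto_atTop_add_const_right _ (-ω) tendsto_id).inv_tendsto_atTop.const_mul M
  refine tendsto_clm_apply_of_dense (F := fun lam => lam • R lam) (S := 1) hbound hD
    (fun y hy => ?_) x
  refine tendsto_iff_norm_sub_tendsto_zero.2 (squeeze_zero' (.of_forall fun _ => norm_nonneg _)
    (g := fun lam => M * (lam - ω)⁻¹ * ‖A y‖) ?_ (by simpa using hinv.mul_const ‖A y‖))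
  filter_upwards [eventually_gt_atTop ω] with lam hlam
  rw [_root_.smul_apply, hR.smul_apply hlam hy, one_apply_eq_self, add_sub_cancel_left]
  exact (R lam).le_of_opNorm_le (hM lam hlam) _

theorem tendsto_yosidaApprox_apply (hR : IsResolventFamily D A ω R) (hD : Dense D)
    (hM : ∀ lam, ω < lam → ‖R lam‖ ≤ M * (lam - ω)⁻¹) (hy : y ∈ D) :
    Tendsto (fun lam => yosidaApprox lam (R lam) y) atTop (𝓝 (A y)) := by
  refine (hR.tendsto_smul_apply hD hM (A y)).congr' ?_
  filter_upwards [eventually_gt_atTop ω] with lam hlam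
  exact (hR.yosidaApprox_apply hlam hy).symm

end IsResolventFamily

end Resolvent

section Dyson

variable {X : Type*} [NormedAddCommGroup X] [NormedSpace ℝ X] {B : ℝ → X →L[ℝ] X} {J : Set ℝ}
  {s T M β : ℝ}

/-- Kato's stability condition for a family of bounded operators: products of values of `B` on `J`,
taken with times decreasing from left to right, grow at most geometrically in the number of
factors. For resolvents at `lam` the rate is `β = (lam - ω)⁻¹`. -/
def TimeOrderedProdBound (B : ℝ → X →L[ℝ] X) (J : Set ℝ) (M β : ℝ) : Prop :=
  ∀ l : List ℝ, l.SortedGE → (∀ t ∈ l, t ∈ J) → ‖(l.map B).prod‖ ≤ M * β ^ l.length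

namespace TimeOrderedProdBound

theorem of_monotone (h : ∀ (k : ℕ) (ts : Fin k → ℝ), (∀ i, ts i ∈ J) → Monotone ts →
      ‖(List.ofFn fun i => B (ts i)).reverse.prod‖ ≤ M * β ^ k) :
    TimeOrderedProdBound B J M β := by
  intro l hl hlJ
  have hofFn : (List.ofFn fun i => B (l.reverse.get i)).reverse = l.map B := by
    rw [← Function.comp_def B, ← List.map_ofFn, List.ofFn_get, List.map_reverse,
      List.reverse_reverse]
  have hprod := h l.reverse.length l.reverse.get
    (fun i => hlJ _ (List.mem_reverse.1 (List.get_mem _ _)))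
    (List.sortedLE_iff_monotone_get.1 (List.sortedLE_reverse.2 hl))
  rwa [hofFn, List.length_reverse] at hprod

theorem mono {K : Set ℝ} (h : TimeOrderedProdBound B J M β) (hKJ : K ⊆ J) :
    TimeOrderedProdBound B K M β :=
  fun l hl hlK => h l hl fun t ht => hKJ (hlK t ht)

theorem norm_le (h : TimeOrderedProdBound B J M β) {t : ℝ} (ht : t ∈ J) : ‖B t‖ ≤ M * β := by
  simpa using h [t] (List.sortedGE_iff_pairwise.2 (List.pairwise_singleton _ _)) (by simpa using ht)

theorem nonneg (h : TimeOrderedProdBound B J M β) : 0 ≤ M := by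
  simpa using (norm_nonneg _).trans (h [] (List.sortedGE_iff_pairwise.2 .nil) (by simp))

theorem const_smul (h : TimeOrderedProdBound B J M β) (c : ℝ) :
    TimeOrderedProdBound (fun t => c • B t) J M (|c| * β) := by
  intro l hl hlJ
  have hprod : (l.map fun t => c • B t).prod = c ^ l.length • (l.map B).prod := by
    simpa [Function.comp_def] using (List.smul_prod (l.map B) c).symm
  calc ‖(l.map fun t => c • B t).prod‖ = |c| ^ l.length * ‖(l.map B).prod‖ := by
        rw [hprod, norm_smul, norm_pow, norm_eq_abs]
    _ ≤ |c| ^ l.length * (M * β ^ l.length) := by gcongr; exact h l hl hlJ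
    _ = M * (|c| * β) ^ l.length := by ring

end TimeOrderedProdBound

/-- The `k`-th term of the Dyson series solving `v' = B v`, `v s = x`: the `k`-fold iterated
integral `∫ B τ₁ ⋯ B τₖ x` over `t ≥ τ₁ ≥ ⋯ ≥ τₖ ≥ s`. -/
noncomputable def dysonTerm (B : ℝ → X →L[ℝ] X) (s : ℝ) (x : X) : ℕ → ℝ → X
  | 0, _ => x
  | k + 1, t => ∫ τ in s..t, B τ (dysonTerm B s x k τ)

/-- The Dyson series, the solution of `v' = B v` with `v s = x` at time `t`. -/
noncomputable def dysonSeries (B : ℝ → X →L[ℝ] X) (s : ℝ) (x : X) (t : ℝ) : X :=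
  ∑' k, dysonTerm B s x k t

theorem dysonTerm_smul (c : ℝ) (x : X) (k : ℕ) (t : ℝ) :
    dysonTerm B s (c • x) k t = c • dysonTerm B s x k t := by
  induction k generalizing t with
  | zero => rfl
  | succ k ih => simp only [dysonTerm, ih, map_smul, intervalIntegral.integral_smul]

theorem dysonSeries_smul (c : ℝ) (x : X) (t : ℝ) :
    dysonSeries B s (c • x) t = c • dysonSeries B s x t := by
  simp only [dysonSeries, dysonTerm_smul, tsum_const_smul'']

theorem hasSum_mul_pow_div_factorial_mul (M r b : ℝ) :
    HasSum (fun k : ℕ => M * (r ^ k / k.factorial) * b) (M * exp r * b) := by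
  rw [Real.exp_eq_exp_ℝ]
  exact ((NormedSpace.expSeries_div_hasSum_exp r).mul_left M).mul_right b

variable [CompleteSpace X]

theorem continuousOn_dysonTerm (hB : StronglyContinuousOn B (Icc s T)) (x : X) (k : ℕ) :
    ContinuousOn (dysonTerm B s x k) (Icc s T) := by
  induction k with
  | zero => exact continuousOn_const
  | succ k ih =>
    obtain hsT | hsT := lt_or_ge T s
    · simp [Icc_eq_empty_of_lt hsT]
    · rw [← uIcc_of_le hsT] at hB ih ⊢
      exact intervalIntegral.continuousOn_primitive_interval
        ((hB.clm_apply isCompact_uIcc ih).integrableOn_compact isCompact_uIcc)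

theorem intervalIntegrable_dysonTerm (hB : StronglyContinuousOn B (Icc s T)) (x : X) (k : ℕ)
    {t : ℝ} (ht : t ∈ Icc s T) :
    IntervalIntegrable (fun τ => B τ (dysonTerm B s x k τ)) volume s t := by
  refine (hB.clm_apply isCompact_Icc (continuousOn_dysonTerm hB x k)).mono ?_
    |>.intervalIntegrable
  exact uIcc_subset_Icc ⟨le_rfl, ht.1.trans ht.2⟩ ht

theorem dysonTerm_add (hB : StronglyContinuousOn B (Icc s T)) (x y : X) (k : ℕ) {t : ℝ}
    (ht : t ∈ Icc s T) :
    dysonTerm B s (x + y) k t = dysonTerm B s x k t + dysonTerm B s y k t := by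
  induction k generalizing t with
  | zero => rfl
  | succ k ih =>
    simp only [dysonTerm]
    rw [← intervalIntegral.integral_add (intervalIntegrable_dysonTerm hB x k ht)
      (intervalIntegrable_dysonTerm hB y k ht)]
    refine intervalIntegral.integral_congr fun τ hτ => ?_
    simp only [ih (uIcc_subset_Icc ⟨le_rfl, ht.1.trans ht.2⟩ ht hτ), map_add]

theorem integral_mul_pow_sub_div_factorial (c β s t : ℝ) (k : ℕ) :
    ∫ τ in s..t, c * β * ((β * (τ - s)) ^ k / k.factorial) =
      c * ((β * (t - s)) ^ (k + 1) / (k + 1).factorial) := by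
  have hpow (τ : ℝ) : c * β * ((β * (τ - s)) ^ k / k.factorial) =
      c * β ^ (k + 1) / k.factorial * (τ - s) ^ k := by
    rw [mul_pow, pow_succ]; ring
  simp only [hpow]
  rw [intervalIntegral.integral_const_mul,
    intervalIntegral.integral_comp_sub_right (fun u => u ^ k), integral_pow, Nat.factorial_succ,
    mul_pow]
  push_cast
  field_simp
  simp

namespace TimeOrderedProdBound

/- The induction peels off the outermost integral of the Dyson term and appends its integration
variable as the earliest factor of the product, so the product has to be part of the claim. -/
theorem norm_prod_dysonTerm_le (h : TimeOrderedProdBound B (Icc s T) M β)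
    (hB : StronglyContinuousOn B (Icc s T)) (x : X) (k : ℕ) {t : ℝ} (ht : t ∈ Icc s T)
    {l : List ℝ} (hl : l.SortedGE) (hlt : ∀ r ∈ l, r ∈ Icc t T) :
    ‖(l.map B).prod (dysonTerm B s x k t)‖ ≤
      M * β ^ l.length * ((β * (t - s)) ^ k / k.factorial) * ‖x‖ := by
  induction k generalizing t l with
  | zero =>
    simpa [dysonTerm] using ContinuousLinearMap.le_of_opNorm_le _
      (h l hl fun r hr => Icc_subset_Icc_left ht.1 (hlt r hr)) x
  | succ k ih =>
    have hstep : ∀ τ ∈ Ioc s t, ‖(l.map B).prod (B τ (dysonTerm B s x k τ))‖ ≤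
        M * β ^ l.length * ‖x‖ * β * ((β * (τ - s)) ^ k / k.factorial) := by
      intro τ hτ
      have hτT : τ ∈ Icc s T := ⟨hτ.1.le, hτ.2.trans ht.2⟩
      have hsorted : (l ++ [τ]).SortedGE := by
        rw [List.sortedGE_iff_pairwise] at hl ⊢
        simpa [List.pairwise_append, hl] using fun r hr => hτ.2.trans (hlt r hr).1
      have hmem : ∀ r ∈ l ++ [τ], r ∈ Icc τ T := by
        simpa [or_imp, forall_and, hτT.2] using
          And.intro (fun r hr => hτ.2.trans (hlt r hr).1) fun r hr => (hlt r hr).2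
      have := ih hτT hsorted hmem
      simp only [List.map_append, List.map_cons, List.map_nil, List.prod_append,
        List.prod_singleton, mul_apply_eq_comp, List.length_append, List.length_singleton] at this
      exact this.trans_eq (by ring)
    calc ‖(l.map B).prod (dysonTerm B s x (k + 1) t)‖
        = ‖∫ τ in s..t, (l.map B).prod (B τ (dysonTerm B s x k τ))‖ := by
          rw [dysonTerm, ← ContinuousLinearMap.intervalIntegral_comp_comm _
            (intervalIntegrable_dysonTerm hB x k ht)]
      _ ≤ ∫ τ in s..t, M * β ^ l.length * ‖x‖ * β * ((β * (τ - s)) ^ k / k.factorial) :=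
          intervalIntegral.norm_integral_le_of_norm_le ht.1 (.of_forall hstep)
            (Continuous.intervalIntegrable (by fun_prop) _ _)
      _ = M * β ^ l.length * ((β * (t - s)) ^ (k + 1) / (k + 1).factorial) * ‖x‖ := by
          rw [integral_mul_pow_sub_div_factorial]; ring

theorem norm_dysonTerm_le (h : TimeOrderedProdBound B (Icc s T) M β)
    (hB : StronglyContinuousOn B (Icc s T)) (x : X) (k : ℕ) {t : ℝ} (ht : t ∈ Icc s T) :
    ‖dysonTerm B s x k t‖ ≤ M * ((β * (t - s)) ^ k / k.factorial) * ‖x‖ := by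
  simpa using h.norm_prod_dysonTerm_le hB x k ht (List.sortedGE_iff_pairwise.2 .nil) (by simp)

theorem norm_dysonTerm_le_uniform (h : TimeOrderedProdBound B (Icc s T) M β)
    (hB : StronglyContinuousOn B (Icc s T)) (hβ : 0 ≤ β) (x : X) (k : ℕ) {t : ℝ}
    (ht : t ∈ Icc s T) :
    ‖dysonTerm B s x k t‖ ≤ M * ((β * (T - s)) ^ k / k.factorial) * ‖x‖ := by
  have hM := h.nonneg
  have hst : 0 ≤ t - s := sub_nonneg.2 ht.1
  refine (h.norm_dysonTerm_le hB x k ht).trans ?_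
  gcongr
  exact ht.2

theorem summable_dysonTerm (h : TimeOrderedProdBound B (Icc s T) M β)
    (hB : StronglyContinuousOn B (Icc s T)) (x : X) {t : ℝ} (ht : t ∈ Icc s T) :
    Summable fun k => dysonTerm B s x k t :=
  .of_norm_bounded (hasSum_mul_pow_div_factorial_mul _ _ _).summable
    fun k => h.norm_dysonTerm_le hB x k ht

theorem dysonSeries_add (h : TimeOrderedProdBound B (Icc s T) M β)
    (hB : StronglyContinuousOn B (Icc s T)) (x y : X) {t : ℝ} (ht : t ∈ Icc s T) :
    dysonSeries B s (x + y) t = dysonSeries B s x t + dysonSeries B s y t := by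
  simp only [dysonSeries, dysonTerm_add hB x y _ ht]
  exact (h.summable_dysonTerm hB x ht).tsum_add (h.summable_dysonTerm hB y ht)

theorem norm_dysonSeries_le (h : TimeOrderedProdBound B (Icc s T) M β)
    (hB : StronglyContinuousOn B (Icc s T)) (x : X) {t : ℝ} (ht : t ∈ Icc s T) :
    ‖dysonSeries B s x t‖ ≤ M * exp (β * (t - s)) * ‖x‖ :=
  tsum_of_norm_bounded (hasSum_mul_pow_div_factorial_mul _ _ _)
    fun k => h.norm_dysonTerm_le hB x k ht

theorem continuousOn_dysonSeries (h : TimeOrderedProdBound B (Icc s T) M β)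
    (hB : StronglyContinuousOn B (Icc s T)) (hβ : 0 ≤ β) (x : X) :
    ContinuousOn (dysonSeries B s x) (Icc s T) :=
  continuousOn_tsum (continuousOn_dysonTerm hB x)
    (hasSum_mul_pow_div_factorial_mul _ _ _).summable
    fun k _ ht => h.norm_dysonTerm_le_uniform hB hβ x k ht

theorem dysonSeries_eq_add_integral (h : TimeOrderedProdBound B (Icc s T) M β)
    (hB : StronglyContinuousOn B (Icc s T)) (hβ : 0 ≤ β) (x : X) {t : ℝ} (ht : t ∈ Icc s T) :
    dysonSeries B s x t = x + ∫ τ in s..t, B τ (dysonSeries B s x τ) := by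
  have hsub : ∀ τ ∈ uIoc s t, τ ∈ Icc s T := fun τ hτ =>
    uIcc_subset_Icc ⟨le_rfl, ht.1.trans ht.2⟩ ht (uIoc_subset_uIcc hτ)
  have : 0 ≤ M * β := mul_nonneg h.nonneg hβ
  rw [dysonSeries, (h.summable_dysonTerm hB x ht).tsum_eq_zero_add]
  refine congrArg (x + ·) (HasSum.tsum_eq ?_)
  refine intervalIntegral.hasSum_integral_of_dominated_convergence
    (fun k _ => M * β * (M * ((β * (T - s)) ^ k / k.factorial) * ‖x‖))
    (fun k => (intervalIntegrable_dysonTerm hB x k ht).aestronglyMeasurable_restrict_uIoc)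
    (fun k => .of_forall fun τ hτ => ?_)
    (.of_forall fun _ _ => (hasSum_mul_pow_div_factorial_mul _ _ _).summable.mul_left _)
    intervalIntegrable_const
    (.of_forall fun τ hτ => (B τ).hasSum (h.summable_dysonTerm hB x (hsub τ hτ)).hasSum)
  exact (B τ).le_of_opNorm_le_of_le (h.norm_le (hsub τ hτ))
    (h.norm_dysonTerm_le_uniform hB hβ x k (hsub τ hτ))

end TimeOrderedProdBound

end Dyson

section Propagator

variable {X : Type*} [NormedAddCommGroup X] [NormedSpace ℝ X]
  {B : ℝ → X →L[ℝ] X} {U : ℝ → ℝ → X →L[ℝ] X} {J : Set ℝ} {M β : ℝ}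

/-- `U t s`, for `s ≤ t` in `J`, propagates the mild solutions of `v' = B v` from time `s` to
time `t`. -/
structure IsPropagatorOn (B : ℝ → X →L[ℝ] X) (J : Set ℝ) (U : ℝ → ℝ → X →L[ℝ] X) : Prop where
  continuousOn : ∀ s ∈ J, ∀ t ∈ J, ∀ x, ContinuousOn (fun τ => U τ s x) (Icc s t)
  eq_add_integral : ∀ s ∈ J, ∀ t ∈ J, s ≤ t → ∀ x, U t s x = x + ∫ τ in s..t, B τ (U τ s x)

variable [CompleteSpace X]

theorem IsPropagatorOn.exp_neg_smul (hU : IsPropagatorOn B J U) (hJ : J.OrdConnected)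
    (hB : StronglyContinuousOn B J) (ν : ℝ) :
    IsPropagatorOn (fun t => B t - ν • (1 : X →L[ℝ] X)) J
      fun t s => exp (-ν * (t - s)) • U t s := by
  refine ⟨fun s hs t ht x => ContinuousOn.smul (by fun_prop) (hU.continuousOn s hs t ht x),
    fun s hs t ht hst x => ?_⟩
  have hBst : StronglyContinuousOn B (Icc s t) := hB.mono (hJ.out hs ht)
  have hs_mem : s ∈ Icc s t := left_mem_Icc.2 hst
  have hderiv : ∀ r ∈ Icc s t, HasDerivWithinAt (fun r => exp (-ν * (r - s)) • U r s x)
      ((B r - ν • (1 : X →L[ℝ] X)) (exp (-ν * (r - s)) • U r s x)) (Icc s t) r := by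
    intro r hr
    have hUr : HasDerivWithinAt (fun r => U r s x) (B r (U r s x)) (Icc s t) r :=
      (ODE.hasDerivWithinAt_picard_Icc hs_mem (hBst.continuousOn_uncurry isCompact_Icc)
        (hU.continuousOn s hs t ht x) (fun _ _ => mem_univ _) x hr).congr_of_mem
        (fun q hq => hU.eq_add_integral s hs q (hJ.out hs ht hq) hq.1 x) hr
    have hexp : HasDerivAt (fun r => exp (-ν * (r - s))) (exp (-ν * (r - s)) * (-ν)) r := by
      simpa using (((hasDerivAt_id r).sub_const s).const_mul (-ν)).exp
    refine (hexp.hasDerivWithinAt.smul hUr).congr_deriv ?_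
    simp only [_root_.sub_apply, _root_.smul_apply, map_smul, one_apply_eq_self]
    module
  have hUs : U s s x = x := by simpa using hU.eq_add_integral s hs s hs le_rfl x
  have hpicard := ODE.picard_eq_of_hasDerivAt (t₀ := s) (t := t) (u := univ)
    (f := fun r => ⇑(B r - ν • (1 : X →L[ℝ] X))) (α := fun r => exp (-ν * (r - s)) • U r s x)
    (by simpa only [uIcc_of_le hst] using (hBst.sub_const _).continuousOn_uncurry isCompact_Icc)
    (by simpa only [uIcc_of_le hst] using hderiv) (mapsTo_univ _ _)
  simp only [ODE.picard_apply, sub_self, mul_zero, exp_zero, one_smul, hUs] at hpicard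
  exact hpicard.symm

theorem TimeOrderedProdBound.exists_clm_eq_dysonSeries (h : TimeOrderedProdBound B J M β)
    (hJ : J.OrdConnected) (hB : StronglyContinuousOn B J) {s t : ℝ} (hs : s ∈ J) (ht : t ∈ J)
    (hst : s ≤ t) :
    ∃ V : X →L[ℝ] X, (∀ x, V x = dysonSeries B s x t) ∧ ‖V‖ ≤ M * exp (β * (t - s)) := by
  have hBst : StronglyContinuousOn B (Icc s t) := hB.mono (hJ.out hs ht)
  have hbound : TimeOrderedProdBound B (Icc s t) M β := h.mono (hJ.out hs ht)
  have ht_mem : t ∈ Icc s t := right_mem_Icc.2 hst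
  exact ⟨LinearMap.mkContinuous
    { toFun := fun x => dysonSeries B s x t
      map_add' := fun x y => hbound.dysonSeries_add hBst x y ht_mem
      map_smul' := fun c x => dysonSeries_smul c x t }
    (M * exp (β * (t - s))) fun x => hbound.norm_dysonSeries_le hBst x ht_mem, fun _ => rfl,
    LinearMap.mkContinuous_norm_le _ (mul_nonneg h.nonneg (exp_pos _).le) _⟩

theorem TimeOrderedProdBound.exists_isPropagatorOn (h : TimeOrderedProdBound B J M β)
    (hβ : 0 ≤ β) (hJ : J.OrdConnected) (hB : StronglyContinuousOn B J) :
    ∃ U, IsPropagatorOn B J U ∧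
      ∀ s ∈ J, ∀ t ∈ J, s ≤ t → ‖U t s‖ ≤ M * exp (β * (t - s)) := by
  choose! V hV hVnorm using fun s (hs : s ∈ J) t (ht : t ∈ J) (hst : s ≤ t) =>
    h.exists_clm_eq_dysonSeries hJ hB hs ht hst
  refine ⟨fun t s => V s t, ⟨fun s hs t ht x => ?_, fun s hs t ht hst x => ?_⟩, hVnorm⟩
  · refine ((h.mono (hJ.out hs ht)).continuousOn_dysonSeries (hB.mono (hJ.out hs ht)) hβ x).congr ?_
    exact fun τ hτ => hV s hs τ (hJ.out hs ht hτ) hτ.1 x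
  · rw [hV s hs t ht hst, (h.mono (hJ.out hs ht)).dysonSeries_eq_add_integral
      (hB.mono (hJ.out hs ht)) hβ x (right_mem_Icc.2 hst)]
    refine congrArg (x + ·) (intervalIntegral.integral_congr fun τ hτ => ?_)
    rw [uIcc_of_le hst] at hτ
    simp only [hV s hs τ (hJ.out hs ht hτ) hτ.1]

theorem TimeOrderedProdBound.exists_isPropagatorOn_yosidaApprox {R : ℝ → X →L[ℝ] X} {lam ω : ℝ}
    (h : TimeOrderedProdBound R J M (lam - ω)⁻¹) (hlam : ω < lam) (hJ : J.OrdConnected)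
    (hR : StronglyContinuousOn R J) :
    ∃ U, IsPropagatorOn (fun t => yosidaApprox lam (R t)) J U ∧
      ∀ s ∈ J, ∀ t ∈ J, s ≤ t → ‖U t s‖ ≤ M * exp (ω * (lam / (lam - ω)) * (t - s)) := by
  have hpos : 0 < lam - ω := sub_pos.2 hlam
  obtain ⟨V, hV, hVnorm⟩ := (h.const_smul (lam ^ 2)).exists_isPropagatorOn (by positivity) hJ
    (hR.const_smul _)
  refine ⟨_, hV.exp_neg_smul hJ (hR.const_smul _) lam, fun s hs t ht hst => ?_⟩
  have hrate : -lam + lam ^ 2 * (lam - ω)⁻¹ = ω * (lam / (lam - ω)) := by field_simp; ring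
  calc ‖exp (-lam * (t - s)) • V t s‖ = exp (-lam * (t - s)) * ‖V t s‖ := by
        rw [norm_smul, norm_of_nonneg (exp_pos _).le]
    _ ≤ exp (-lam * (t - s)) * (M * exp (lam ^ 2 * (lam - ω)⁻¹ * (t - s))) := by
        gcongr
        simpa using hVnorm s hs t ht hst
    _ = M * exp (ω * (lam / (lam - ω)) * (t - s)) := by
        rw [mul_left_comm, ← exp_add, ← add_mul, hrate]

end Propagator

theorem exists_forall_natCast_div_sub_le (ω : ℝ) : ∃ K : ℝ, 0 < K ∧ ∀ n : ℕ, n / (n - ω) ≤ K := by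
  obtain ⟨K, hK⟩ := (tendsto_natCast_div_add_atTop (-ω)).bddAbove_range
  refine ⟨max K 1, by positivity, fun n => le_max_of_le_left (hK ⟨n, ?_⟩)⟩
  simp only [sub_eq_add_neg]

/-- **Yosida approximants are admissible bounded approximations (Lemma 2.13(i)).**
Let `A(t)`, `t ∈ I`, be a Kato-stable family of generators with constants
`M, ω` (expressed through their resolvents `Res λ t = R(λ, A(t))`), and
suppose `t ↦ R(ω', A(t))` is strongly continuous for some `ω' > ω`. Then the
Yosida approximants `A_n(t) = n A(t) R(n, A(t)) = n² R(n,A(t)) − n` (`n > ω`)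
form an admissible bounded approximation of `A(t)`: they are strongly
continuous in `t`, converge to `A(t)` on `D(A(t))`, obey the relative bound
`‖A_n(t)y‖ ≤ c(‖A(t)y‖ + ‖y‖)`, and the propagators they generate are
exponentially bounded with constants independent of `n`. -/
theorem yosida_admissible_approximation
    {X : Type*} [NormedAddCommGroup X] [NormedSpace ℝ X] [CompleteSpace X]
    (I : Set ℝ) (hI : I.OrdConnected)
    -- the family `A(t)` with domains `Dom t`
    (Dom : ℝ → Set X) (Aop : ℝ → X → X)
    (hdense : ∀ t ∈ I, Dense (Dom t))
    -- resolvents `Res λ t = R(λ, A(t))` for `λ > ω`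
    (M ω : ℝ) (hM : 1 ≤ M)
    (Res : ℝ → ℝ → X →L[ℝ] X)
    (hRes_mem : ∀ t ∈ I, ∀ lam : ℝ, ω < lam → ∀ x : X,
      Res lam t x ∈ Dom t ∧ lam • Res lam t x - Aop t (Res lam t x) = x)
    (hRes_inv : ∀ t ∈ I, ∀ lam : ℝ, ω < lam → ∀ y ∈ Dom t,
      Res lam t (lam • y - Aop t y) = y)
    -- Kato stability with constants `M, ω`
    (hstable : ∀ (k : ℕ) (ts : Fin k → ℝ), (∀ i, ts i ∈ I) → Monotone ts →
      ∀ lam : ℝ, ω < lam →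
        ‖((List.ofFn fun i => Res lam (ts i)).reverse).prod‖
          ≤ M * ((lam - ω) ^ k)⁻¹)
    -- strong continuity of `t ↦ R(ω', A(t))`
    (ω' : ℝ) (hω' : ω < ω')
    (hRes_cont : ∀ x : X, ContinuousOn (fun t => Res ω' t x) I) :
    -- (i) strong continuity of `t ↦ A_n(t)`
    (∀ n : ℕ, ω < (n : ℝ) → ∀ x : X, ContinuousOn
      (fun t => ((n : ℝ) ^ 2 • Res (n : ℝ) t - (n : ℝ) • (1 : X →L[ℝ] X)) x) I) ∧
    -- (ii) convergence `A_n(t) y → A(t) y` for `y ∈ D(A(t))`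
    (∀ t ∈ I, ∀ y ∈ Dom t, Tendsto
      (fun n : ℕ => ((n : ℝ) ^ 2 • Res (n : ℝ) t - (n : ℝ) • (1 : X →L[ℝ] X)) y)
      atTop (𝓝 (Aop t y))) ∧
    -- (iii) the relative bound
    (∃ c : ℝ, 0 < c ∧ ∀ n : ℕ, ω < (n : ℝ) → ∀ t ∈ I, ∀ y ∈ Dom t,
      ‖((n : ℝ) ^ 2 • Res (n : ℝ) t - (n : ℝ) • (1 : X →L[ℝ] X)) y‖
        ≤ c * (‖Aop t y‖ + ‖y‖)) ∧
    -- (iv) the generated propagators are exponentially bounded,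
    --      uniformly in `n`
    (∃ M' ω'' : ℝ, 1 ≤ M' ∧ ∀ n : ℕ, ω < (n : ℝ) →
      ∃ Un : ℝ → ℝ → X →L[ℝ] X,
        (∀ s ∈ I, ∀ t ∈ I, s ≤ t → ∀ x : X,
          Un t s x = x + ∫ τ in s..t,
            ((n : ℝ) ^ 2 • Res (n : ℝ) τ - (n : ℝ) • (1 : X →L[ℝ] X))
              (Un τ s x)) ∧
        (∀ s ∈ I, ∀ t ∈ I, s ≤ t → ‖Un t s‖ ≤ M' * exp (ω'' * (t - s)))) := by
  have hres (t) (ht : t ∈ I) : IsResolventFamily (Dom t) (Aop t) ω fun lam => Res lam t :=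
    ⟨fun lam hlam x => (hRes_mem t ht lam hlam x).1,
      fun lam hlam x => (hRes_mem t ht lam hlam x).2, hRes_inv t ht⟩
  have hprod (lam) (hlam : ω < lam) : TimeOrderedProdBound (Res lam) I M (lam - ω)⁻¹ :=
    .of_monotone fun k ts hts hmono => by simpa only [inv_pow] using hstable k ts hts hmono lam hlam
  have hcont (lam) (hlam : ω < lam) : StronglyContinuousOn (Res lam) I :=
    .of_resolvent_identity hRes_cont (fun t ht => (hres t ht).sub_eq_smul_mul hlam hω')
      (fun t ht => (hres t ht).sub_eq_smul_mul_swap hlam hω')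
      fun t ht => (hprod lam hlam).norm_le ht
  obtain ⟨K, hK_pos, hK⟩ := exists_forall_natCast_div_sub_le ω
  refine ⟨fun n hn => ((hcont n hn).const_smul _).sub_const _, fun t ht y hy => ?_,
    ⟨M * K, mul_pos (one_pos.trans_le hM) hK_pos,
      fun n hn t ht y hy => ?_⟩, M, |ω| * K, hM, fun n hn => ?_⟩
  · exact ((hres t ht).tendsto_yosidaApprox_apply (hdense t ht)
      (fun lam hlam => (hprod lam hlam).norm_le ht) hy).comp tendsto_natCast_atTop_atTop
  · refine ((hres t ht).norm_yosidaApprox_apply_le hn n.cast_nonneg ((hprod n hn).norm_le ht)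
      hy).trans ?_
    gcongr
    exacts [hK n, le_add_of_nonneg_right (norm_nonneg y)]
  · obtain ⟨U, hU, hU_norm⟩ := (hprod n hn).exists_isPropagatorOn_yosidaApprox hn hI (hcont n hn)
    refine ⟨U, hU.eq_add_integral, fun s hs t ht hst => (hU_norm s hs t ht hst).trans ?_⟩
    have : 0 ≤ t - s := sub_nonneg.2 hst
    have : 0 ≤ n / (n - ω) := div_nonneg n.cast_nonneg (sub_pos.2 hn).le
    gcongr
    exacts [le_abs_self ω, hK n]
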